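/- arXiv:1905.10299 — 2 statements merged into one kernel-verified Lean document; each statement's English description precedes it below -/
import Mathlib

section
/- (Composite bound (13) on the exact second-order remainder for the treatment-specific mean.) Let μ₀ be a probability measure on a measurable space 𝒲, let G₀, G : 𝒲 → (0,1) and Q̄₀, Q̄ : {0,1} × 𝒲 → (0,1) be measurable with G(w) ≥ δ and G₀(w) ≥ δ for all w, for some δ ∈ (0,1). Define d_G := ∫ kl(G₀(w), G(w)) dμ₀(w) and d_Q := Σ_{a∈{0,1}} ∫ G₀(w)^a (1−G₀(w))^{1−a} · kl(Q̄₀(a,w), Q̄(a,w)) dμ₀(w), where kl(q₀,q) := q₀ log(q₀/q) + (1−q₀) log((1−q₀)/(1−q)). Then | ∫ ((G(w) − G₀(w))/G(w)) (Q̄(1,w) − Q̄₀(1,w)) dμ₀(w) | ≤ 4 δ^{−3/2} · d_Q^{1/2} · d_G^{1/2}. -/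
open MeasureTheory

/-- Bernoulli Kullback–Leibler divergence
`kl(q₀,q) = q₀ log(q₀/q) + (1−q₀) log((1−q₀)/(1−q))`. -/
noncomputable def bernKL (q₀ q : ℝ) : ℝ :=
  q₀ * Real.log (q₀ / q) + (1 - q₀) * Real.log ((1 - q₀) / (1 - q))

lemma log_aux {p q : ℝ} (hp : 0 < p) (hq : 0 < q) :
    2 * (p - √p * √q) ≤ p * Real.log (p / q) := by
  have ha := Real.sqrt_pos.2 hp
  have hb := Real.sqrt_pos.2 hq
  have h1 := Real.log_le_sub_one_of_pos (div_pos hb ha)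
  have h2 : Real.log (p / q) = -2 * Real.log (√q / √p) := by
    rw [Real.log_div hp.ne' hq.ne', Real.log_div hb.ne' ha.ne', Real.log_sqrt hp.le,
      Real.log_sqrt hq.le]
    ring
  have h3 : p * (√q / √p) = √p * √q := by
    field_simp
    rw [Real.sq_sqrt hp.le]
  rw [h2]
  nlinarith

lemma bernKL_lower {p q : ℝ} (hp : p ∈ Set.Ioo (0 : ℝ) 1) (hq : q ∈ Set.Ioo (0 : ℝ) 1) :
    (p - q) ^ 2 ≤ 4 * bernKL p q := by
  obtain ⟨hp0, hp1⟩ := hp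
  obtain ⟨hq0, hq1⟩ := hq
  have h1 := log_aux hp0 hq0
  have h2 := log_aux (sub_pos.2 hp1) (sub_pos.2 hq1)
  have e1 := Real.sq_sqrt hp0.le
  have e2 := Real.sq_sqrt hq0.le
  have e3 := Real.sq_sqrt (sub_pos.2 hp1).le
  have e4 := Real.sq_sqrt (sub_pos.2 hq1).le
  have l1 : √p ≤ 1 := Real.sqrt_le_one.2 hp1.le
  have l2 : √q ≤ 1 := Real.sqrt_le_one.2 hq1.le
  have n1 := Real.sqrt_nonneg p
  have n2 := Real.sqrt_nonneg q
  have h3 : (√p - √q) ^ 2 ≤ bernKL p q := by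
    unfold bernKL
    nlinarith [sq_nonneg (√(1 - p) - √(1 - q))]
  have h4 : (p - q) ^ 2 = (√p - √q) ^ 2 * (√p + √q) ^ 2 := by
    rw [← mul_pow, ← e1, ← e2]
    simp only [Real.sqrt_sq n1, Real.sqrt_sq n2]
    ring
  have h5 : (√p + √q) ^ 2 ≤ 4 := by nlinarith
  rw [h4]
  nlinarith [sq_nonneg (√p - √q)]

lemma memLp_sqrt {α : Type*} [MeasurableSpace α] {μ : Measure α} {f : α → ℝ}
    (hf : Integrable f μ) (h0 : ∀ x, 0 ≤ f x) : MemLp (fun x => √(f x)) 2 μ := by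
  rw [memLp_two_iff_integrable_sq
    (Real.continuous_sqrt.comp_aestronglyMeasurable hf.aestronglyMeasurable)]
  simpa only [Real.sq_sqrt (h0 _)] using hf

lemma cs_aux {α : Type*} [MeasurableSpace α] {μ : Measure α} {f g : α → ℝ}
    (hf : Integrable f μ) (hg : Integrable g μ) (f0 : ∀ x, 0 ≤ f x) (g0 : ∀ x, 0 ≤ g x) :
    ∫ x, √(f x) * √(g x) ∂μ ≤ √(∫ x, f x ∂μ) * √(∫ x, g x ∂μ) := by
  have h := integral_mul_le_Lp_mul_Lq_of_nonneg (μ := μ) Real.HolderConjugate.two_two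
    (f := fun x => √(f x)) (g := fun x => √(g x))
    (Filter.Eventually.of_forall fun x => Real.sqrt_nonneg _)
    (Filter.Eventually.of_forall fun x => Real.sqrt_nonneg _)
    (by simpa using memLp_sqrt hf f0) (by simpa using memLp_sqrt hg g0)
  simpa only [Real.rpow_two, Real.sq_sqrt (f0 _), Real.sq_sqrt (g0 _), ← Real.sqrt_eq_rpow]
    using h

/-- Composite bound (13) on the exact second-order remainder for the
treatment-specific mean: with `G ≥ δ`, `G₀ ≥ δ`, and `d_G`, `d_Q` the
Kullback–Leibler loss-based dissimilarities of the propensity score and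
outcome regression, `|R₂| ≤ 4 δ^{−3/2} d_Q^{1/2} d_G^{1/2}`. -/
theorem ate_remainder_composite_bound {𝒲 : Type*} [MeasurableSpace 𝒲]
    (μ₀ : Measure 𝒲) [IsProbabilityMeasure μ₀]
    (G₀ G : 𝒲 → ℝ) (Qbar₀ Qbar : ℕ → 𝒲 → ℝ) (δ : ℝ) (hδ : δ ∈ Set.Ioo (0 : ℝ) 1)
    (hG₀m : Measurable G₀) (hGm : Measurable G)
    (hQbar₀m : ∀ a, Measurable (Qbar₀ a)) (hQbarm : ∀ a, Measurable (Qbar a))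
    (hG₀ : ∀ w, G₀ w ∈ Set.Ioo (0 : ℝ) 1) (hG : ∀ w, G w ∈ Set.Ioo (0 : ℝ) 1)
    (hQbar₀ : ∀ a w, Qbar₀ a w ∈ Set.Ioo (0 : ℝ) 1)
    (hQbar : ∀ a w, Qbar a w ∈ Set.Ioo (0 : ℝ) 1)
    (hGδ : ∀ w, δ ≤ G w) (hG₀δ : ∀ w, δ ≤ G₀ w)
    (hIntG : Integrable (fun w => bernKL (G₀ w) (G w)) μ₀)
    (hIntQ : ∀ a,
      Integrable (fun w => (G₀ w ^ a * (1 - G₀ w) ^ (1 - a)) *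
        bernKL (Qbar₀ a w) (Qbar a w)) μ₀)
    (dG dQ : ℝ)
    (hdG : dG = ∫ w, bernKL (G₀ w) (G w) ∂μ₀)
    (hdQ : dQ = ∑ a ∈ Finset.range 2,
      ∫ w, (G₀ w ^ a * (1 - G₀ w) ^ (1 - a)) * bernKL (Qbar₀ a w) (Qbar a w) ∂μ₀) :
    |∫ w, ((G w - G₀ w) / G w) * (Qbar 1 w - Qbar₀ 1 w) ∂μ₀| ≤
      4 * δ ^ (-(3 : ℝ) / 2) * Real.sqrt dQ * Real.sqrt dG := by
  have hδ0 : 0 < δ := hδ.1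
  have kG0 : ∀ w, 0 ≤ bernKL (G₀ w) (G w) := fun w => by
    nlinarith [bernKL_lower (hG₀ w) (hG w), sq_nonneg (G₀ w - G w)]
  have kQ0 : ∀ a w, 0 ≤ bernKL (Qbar₀ a w) (Qbar a w) := fun a w => by
    nlinarith [bernKL_lower (hQbar₀ a w) (hQbar a w), sq_nonneg (Qbar₀ a w - Qbar a w)]
  have hI1 : Integrable (fun w => G₀ w * bernKL (Qbar₀ 1 w) (Qbar 1 w)) μ₀ := by
    simpa using hIntQ 1
  have n1 : ∀ w, 0 ≤ G₀ w * bernKL (Qbar₀ 1 w) (Qbar 1 w) :=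
    fun w => mul_nonneg (hG₀ w).1.le (kQ0 1 w)
  have hQle : ∫ w, G₀ w * bernKL (Qbar₀ 1 w) (Qbar 1 w) ∂μ₀ ≤ dQ := by
    rw [hdQ, Finset.sum_range_succ, Finset.sum_range_one]
    have : 0 ≤ ∫ w, (G₀ w ^ 0 * (1 - G₀ w) ^ (1 - 0)) * bernKL (Qbar₀ 0 w) (Qbar 0 w) ∂μ₀ :=
      integral_nonneg fun w => by
        have := (hG₀ w).2
        have := kQ0 0 w
        simp only [pow_zero, one_mul, Nat.sub_zero, pow_one, Pi.zero_apply]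
        exact mul_nonneg (by linarith) this
    simpa using this
  have hd : δ ^ (-(3 : ℝ) / 2) = 1 / (δ * √δ) := by
    rw [show (-(3 : ℝ) / 2) = -(1 + 1 / 2) by norm_num, Real.rpow_neg hδ0.le,
      Real.rpow_add hδ0, Real.rpow_one, ← Real.sqrt_eq_rpow, one_div]
  have hsδ := Real.sqrt_pos.2 hδ0
  have hc : 0 ≤ 4 * δ ^ (-(3 : ℝ) / 2) := by positivity
  have two : √(4 : ℝ) = 2 := by
    rw [show (4 : ℝ) = 2 ^ 2 by norm_num, Real.sqrt_sq (by norm_num)]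
  have hpt : ∀ w, ‖((G w - G₀ w) / G w) * (Qbar 1 w - Qbar₀ 1 w)‖ ≤
      4 * δ ^ (-(3 : ℝ) / 2) * (√(G₀ w * bernKL (Qbar₀ 1 w) (Qbar 1 w)) *
        √(bernKL (G₀ w) (G w))) := by
    intro w
    have a1 : |G w - G₀ w| ≤ 2 * √(bernKL (G₀ w) (G w)) := by
      rw [← two, ← Real.sqrt_mul (by norm_num), abs_sub_comm]
      exact Real.abs_le_sqrt (bernKL_lower (hG₀ w) (hG w))
    have a2 : |Qbar 1 w - Qbar₀ 1 w| ≤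
        2 * √(G₀ w * bernKL (Qbar₀ 1 w) (Qbar 1 w)) / √δ := by
      rw [← two, ← Real.sqrt_mul (by norm_num), ← Real.sqrt_div' _ hδ0.le, abs_sub_comm]
      apply Real.abs_le_sqrt
      rw [le_div_iff₀ hδ0]
      nlinarith [bernKL_lower (hQbar₀ 1 w) (hQbar 1 w),
        mul_le_mul_of_nonneg_right (hG₀δ w) (kQ0 1 w)]
    have a3 : |(G w - G₀ w) / G w| ≤ 2 * √(bernKL (G₀ w) (G w)) / δ := by
      rw [abs_div, abs_of_pos (hG w).1]
      exact div_le_div₀ (by positivity) a1 hδ0 (hGδ w)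
    rw [Real.norm_eq_abs, abs_mul, hd]
    refine (mul_le_mul a3 a2 (abs_nonneg _) (by positivity)).trans (le_of_eq ?_)
    field_simp
    ring
  have hint := (memLp_sqrt hI1 n1).integrable_mul (memLp_sqrt hIntG kG0)
  have key := norm_integral_le_of_norm_le (hint.const_mul (4 * δ ^ (-(3 : ℝ) / 2)))
    (Filter.Eventually.of_forall hpt)
  rw [Real.norm_eq_abs] at key
  refine key.trans ?_
  rw [integral_const_mul, mul_assoc _ (√dQ)]
  refine mul_le_mul_of_nonneg_left ?_ hc
  refine (cs_aux hI1 hIntG n1 kG0).trans ?_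
  rw [← hdG]
  gcongr
end

section
/- (Bound on the exact remainder by the Kullback–Leibler dissimilarity in the density example.) Let μ be a σ-finite measure on a measurable space Ω, and let p, p₀ : Ω → ℝ be nonnegative measurable probability densities with respect to μ (∫p dμ = ∫p₀ dμ = 1) such that p ≤ M and p₀ ≤ M μ-almost everywhere for some M < ∞, and p > 0 μ-almost everywhere on {p₀ > 0}. Then ∫ (p − p₀)² dμ ≤ 4M ∫ p₀ log(p₀/p) dμ. -/
open MeasureTheory

theorem kl_pointwise_aux (p q M : ℝ) (hp : 0 ≤ p) (hq : 0 ≤ q) (hpM : p ≤ M) (hqM : q ≤ M)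
    (hpos : 0 < q → 0 < p) :
    (p - q) ^ 2 ≤ 4 * M * (q * Real.log (q / p) + (p - q)) := by
  rcases hq.eq_or_lt with h | h
  · subst h
    simp only [sub_zero, zero_mul, zero_add]
    nlinarith
  · have hp' := hpos h
    obtain ⟨a, ha, rfl⟩ : ∃ a : ℝ, 0 < a ∧ a ^ 2 = p :=
      ⟨√p, Real.sqrt_pos.2 hp', Real.sq_sqrt hp⟩
    obtain ⟨b, hb, rfl⟩ : ∃ b : ℝ, 0 < b ∧ b ^ 2 = q :=
      ⟨√q, Real.sqrt_pos.2 h, Real.sq_sqrt hq⟩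
    have h1 : Real.log (b ^ 2 / a ^ 2) = -(2 * Real.log (a / b)) := by
      rw [Real.log_div (by positivity) (by positivity), Real.log_div ha.ne' hb.ne',
        Real.log_pow, Real.log_pow]
      push_cast
      ring
    have h2 : Real.log (a / b) ≤ a / b - 1 := Real.log_le_sub_one_of_pos (by positivity)
    have h3 : b ^ 2 * Real.log (a / b) ≤ a * b - b ^ 2 := by
      calc b ^ 2 * Real.log (a / b) ≤ b ^ 2 * (a / b - 1) := by gcongr
        _ = a * b - b ^ 2 := by field_simp
    have h4 : (a - b) ^ 2 ≤ b ^ 2 * Real.log (b ^ 2 / a ^ 2) + (a ^ 2 - b ^ 2) := by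
      rw [h1]; nlinarith
    have h5 : (a + b) ^ 2 ≤ 4 * M := by nlinarith [sq_nonneg (a - b)]
    calc (a ^ 2 - b ^ 2) ^ 2 = (a + b) ^ 2 * (a - b) ^ 2 := by ring
      _ ≤ _ := mul_le_mul h5 h4 (sq_nonneg _) (le_trans (sq_nonneg _) h5)

/-- Bound on the exact remainder by the Kullback–Leibler dissimilarity in the
integral-of-squared-density example: for densities `p, p₀ ≤ M` (μ-a.e.) with
`p > 0` a.e. on `{p₀ > 0}`, one has `∫ (p − p₀)² dμ ≤ 4M ∫ p₀ log(p₀/p) dμ`. -/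
theorem squared_density_remainder_le_kl {Ω : Type*} [MeasurableSpace Ω]
    (μ : Measure Ω) [SigmaFinite μ] (p p₀ : Ω → ℝ) (M : ℝ)
    (hpm : Measurable p) (hp₀m : Measurable p₀)
    (hp0 : ∀ x, 0 ≤ p x) (hp₀0 : ∀ x, 0 ≤ p₀ x)
    (hpI : Integrable p μ) (hp₀I : Integrable p₀ μ)
    (hp1 : ∫ x, p x ∂μ = 1) (hp₀1 : ∫ x, p₀ x ∂μ = 1)
    (hpM : ∀ᵐ x ∂μ, p x ≤ M) (hp₀M : ∀ᵐ x ∂μ, p₀ x ≤ M)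
    (hpos : ∀ᵐ x ∂μ, 0 < p₀ x → 0 < p x)
    (hklI : Integrable (fun x => p₀ x * Real.log (p₀ x / p x)) μ) :
    ∫ x, (p x - p₀ x) ^ 2 ∂μ ≤ 4 * M * ∫ x, p₀ x * Real.log (p₀ x / p x) ∂μ := by
  have hI : Integrable (fun x => p₀ x * Real.log (p₀ x / p x) + (p x - p₀ x)) μ :=
    hklI.add (hpI.sub hp₀I)
  have h1 : ∫ x, (p x - p₀ x) ^ 2 ∂μ
      ≤ ∫ x, 4 * M * (p₀ x * Real.log (p₀ x / p x) + (p x - p₀ x)) ∂μ := by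
    apply integral_mono_of_nonneg (Filter.Eventually.of_forall fun x => sq_nonneg _)
      (hI.const_mul _)
    filter_upwards [hpM, hp₀M, hpos] with x a b c
    exact kl_pointwise_aux _ _ _ (hp0 x) (hp₀0 x) a b c
  have h2 : ∫ x, (p₀ x * Real.log (p₀ x / p x) + (p x - p₀ x)) ∂μ
      = ∫ x, p₀ x * Real.log (p₀ x / p x) ∂μ := by
    have hs : Integrable (fun x => p x - p₀ x) μ := hpI.sub hp₀I
    rw [integral_add hklI hs, integral_sub hpI hp₀I, hp1, hp₀1]
    simp
  rwa [integral_const_mul, h2] at h1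
end
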